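/- arXiv:2305.10176 — 3 statements merged into one kernel-verified Lean document; each statement's English description precedes it below -/
import Mathlib

section
/- Let N ≥ 3, p_S = (N+2)/(N-2), U(x) = ( N(N-2)/(N(N-2)+|x|²) )^{(N-2)/2} and V(x) = p_S · U(x)^{p_S - 1}. Then for every smooth function g : ℝ → ℝ with compact support contained in (0,∞), the radial function v(x) := g(|x|) satisfies ∫_{ℝ^N} ( |∇v(x)|² - V(x)·v(x)² ) dx ≥ -(N-1) · ∫_{ℝ^N} v(x)²/|x|² dx. -/
/-!
The radial function `φ = -U'`, a multiple of `r (A + r²)^(-N/2)` with `A = N(N-2)`, is positive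
on `(0,∞)` and satisfies `-Δφ - Vφ = -(N-1) φ / r²` (differentiate the equation of `U`), so it is
a ground state and `-(N-1)` bounds the Rayleigh quotient from below. Concretely, put
`c(r) = r φ'(r) / φ(r) = 1 - N r² / (A + r²)`. In polar coordinates, with `N = m + 3`, completing
the square gives
`r^(m+2) (g'² - V g² + (N-1) g² / r²) = (r^(m+1) c g²)' + r^m (r g' - c g)²`
(`ground_state_identity`). The first term on the right integrates to zero over `(0,∞)`
(`flux_integral_eq_zero`) and the second is nonnegative.
-/

open MeasureTheory Real Set

/-- The standard bubble normalized by `U(0) = 1`. -/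
noncomputable def Ububble (N : ℕ) (x : EuclideanSpace ℝ (Fin N)) : ℝ :=
  ((N : ℝ) * ((N : ℝ) - 2) / ((N : ℝ) * ((N : ℝ) - 2) + ‖x‖ ^ 2)) ^ (((N : ℝ) - 2) / 2)

/-- The linearized potential at the standard bubble, `V = p_S U^{p_S-1}`. -/
noncomputable def Vpot (N : ℕ) (x : EuclideanSpace ℝ (Fin N)) : ℝ :=
  ((N : ℝ) + 2) / ((N : ℝ) - 2) *
    Ububble N x ^ (((N : ℝ) + 2) / ((N : ℝ) - 2) - 1)

/-- The radial profile of `Vpot N`, for `N = m + 3` and `U^(p_S - 1) = (A / (A + r²))²`. -/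
noncomputable def radialV (m : ℕ) (r : ℝ) : ℝ :=
  ((m : ℝ) + 5) / ((m : ℝ) + 1) *
    (((m : ℝ) + 3) * ((m : ℝ) + 1) / (((m : ℝ) + 3) * ((m : ℝ) + 1) + r ^ 2)) ^ 2

/-- The logarithmic derivative `r φ'(r) / φ(r)` of the ground state `φ = -U'`, for `N = m + 3`. -/
noncomputable def groundLog (m : ℕ) (r : ℝ) : ℝ :=
  1 - ((m : ℝ) + 3) * r ^ 2 / (((m : ℝ) + 3) * ((m : ℝ) + 1) + r ^ 2)

/-- The flux `r^(N-2) c(r) g(r)²`, for `N = m + 3`, whose derivative absorbs the cross term when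
the square is completed. -/
noncomputable def flux (m : ℕ) (g : ℝ → ℝ) (r : ℝ) : ℝ :=
  r ^ (m + 1) * groundLog m r * g r ^ 2

lemma radial_denom_pos (m : ℕ) (r : ℝ) :
    0 < ((m : ℝ) + 3) * ((m : ℝ) + 1) + r ^ 2 := by positivity

lemma Vpot_eq_radialV (m : ℕ) (x : EuclideanSpace ℝ (Fin (m + 3))) :
    Vpot (m + 3) x = radialV m ‖x‖ := by
  have hm : (0 : ℝ) < (m : ℝ) + 1 := by positivity
  have e1 : ((m + 3 : ℕ) : ℝ) - 2 = (m : ℝ) + 1 := by push_cast; ring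
  have e2 : ((m + 3 : ℕ) : ℝ) + 2 = (m : ℝ) + 5 := by push_cast; ring
  have e3 : ((m + 3 : ℕ) : ℝ) = (m : ℝ) + 3 := by push_cast; ring
  have hb : (0 : ℝ) ≤ ((m : ℝ) + 3) * ((m : ℝ) + 1) /
      (((m : ℝ) + 3) * ((m : ℝ) + 1) + ‖x‖ ^ 2) := by positivity
  unfold Vpot Ububble radialV
  rw [e1, e2, e3, ← Real.rpow_mul hb,
    show ((m : ℝ) + 1) / 2 * (((m : ℝ) + 5) / ((m : ℝ) + 1) - 1) = (2 : ℕ) by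
      field_simp; push_cast; ring,
    Real.rpow_natCast]

lemma continuous_radialV (m : ℕ) : Continuous (radialV m) := by
  unfold radialV
  have h := fun r => (radial_denom_pos m r).ne'
  fun_prop (disch := exact h _)

lemma contDiff_flux (m : ℕ) {g : ℝ → ℝ} (hg : ContDiff ℝ 1 g) : ContDiff ℝ 1 (flux m g) := by
  unfold flux groundLog
  have h := fun r => (radial_denom_pos m r).ne'
  fun_prop (disch := exact h _)

lemma hasCompactSupport_flux (m : ℕ) {g : ℝ → ℝ} (hgc : HasCompactSupport g) :
    HasCompactSupport (flux m g) := by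
  refine hgc.mono' (Function.support_subset_iff'.2 fun r hr => ?_)
  simp [flux, image_eq_zero_of_notMem_tsupport hr]

lemma flux_integral_eq_zero (m : ℕ) {g : ℝ → ℝ} (hg : ContDiff ℝ 1 g)
    (hgc : HasCompactSupport g) : ∫ r in Ioi (0 : ℝ), deriv (flux m g) r = 0 := by
  rw [(hasCompactSupport_flux m hgc).integral_Ioi_deriv_eq (contDiff_flux m hg) 0]
  simp [flux]

lemma deriv_flux (m : ℕ) {g : ℝ → ℝ} (hg : ContDiff ℝ 1 g) (r : ℝ) :
    deriv (flux m g) r =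
      ((m : ℝ) + 1) * r ^ m * groundLog m r * g r ^ 2
        - r ^ (m + 1) * (2 * ((m : ℝ) + 3) * (((m : ℝ) + 3) * ((m : ℝ) + 1)) * r /
            (((m : ℝ) + 3) * ((m : ℝ) + 1) + r ^ 2) ^ 2) * g r ^ 2
        + r ^ (m + 1) * groundLog m r * (2 * g r * deriv g r) := by
  have hd := (radial_denom_pos m r).ne'
  have hgd : HasDerivAt g (deriv g r) r := (hg.differentiable (by norm_num) r).hasDerivAt
  have h2 : HasDerivAt (fun r : ℝ => r ^ 2) (2 * r) r := by
    simpa using hasDerivAt_pow 2 r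
  have hc : HasDerivAt (groundLog m) (-(2 * ((m : ℝ) + 3) * (((m : ℝ) + 3) * ((m : ℝ) + 1)) * r /
      (((m : ℝ) + 3) * ((m : ℝ) + 1) + r ^ 2) ^ 2)) r := by
    have := ((h2.const_mul ((m : ℝ) + 3)).div
      (h2.const_add (((m : ℝ) + 3) * ((m : ℝ) + 1))) hd).const_sub 1
    refine this.congr_deriv ?_
    rw [neg_inj]
    congr 1
    ring
  have := ((hasDerivAt_pow (m + 1) r).mul hc).mul (hgd.pow 2)
  have e : deriv (flux m g) r = _ := this.deriv
  rw [e]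
  simp only [Pi.mul_apply, Pi.pow_apply]
  rw [Nat.add_sub_cancel]
  push_cast
  ring

/-- Completing the square with the ground state; this is the Riccati equation for `groundLog`. -/
lemma ground_state_identity (m : ℕ) {g : ℝ → ℝ} (hg : ContDiff ℝ 1 g) (r : ℝ) :
    r ^ (m + 2) * (deriv g r ^ 2 - radialV m r * g r ^ 2) + ((m : ℝ) + 2) * (r ^ m * g r ^ 2)
      = deriv (flux m g) r + r ^ m * (r * deriv g r - groundLog m r * g r) ^ 2 := by
  have hd := (radial_denom_pos m r).ne'
  have hm : (m : ℝ) + 1 ≠ 0 := by positivity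
  rw [deriv_flux m hg]
  unfold radialV groundLog
  generalize deriv g r = b
  generalize g r = a
  rw [pow_add r m 2, pow_succ r m]
  generalize r ^ m = s
  field_simp
  ring

lemma norm_fderiv_radial {E : Type*} [NormedAddCommGroup E] [InnerProductSpace ℝ E] {g : ℝ → ℝ}
    (hg : ContDiff ℝ 1 g) {x : E} (hx : x ≠ 0) :
    ‖fderiv ℝ (fun y : E => g ‖y‖) x‖ ^ 2 = deriv g ‖x‖ ^ 2 := by
  have hn : DifferentiableAt ℝ (fun y : E => ‖y‖) x :=
    (contDiffAt_norm ℝ hx (n := 1)).differentiableAt (by norm_num)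
  have hgd : HasDerivAt g (deriv g ‖x‖) ‖x‖ := (hg.differentiable (by norm_num) _).hasDerivAt
  have h : HasFDerivAt (fun y : E => g ‖y‖) _ x := hgd.comp_hasFDerivAt x hn.hasFDerivAt
  have : Nontrivial E := ⟨⟨x, 0, hx⟩⟩
  rw [h.fderiv, norm_smul, norm_fderiv_norm hn, mul_one, Real.norm_eq_abs, sq_abs]

/-- Lower-bound half of Theorem 3.13: the singular Rayleigh quotient of the linearized
operator at the standard bubble is bounded below by `-(N-1)` on radial test functions. -/
theorem rayleigh_quotient_lower_bound_radial
    (N : ℕ) (hN : 3 ≤ N) (g : ℝ → ℝ) (hg : ContDiff ℝ (⊤ : ℕ∞) g)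
    (hgc : HasCompactSupport g) (hgsupp : tsupport g ⊆ Set.Ioi 0) :
    ∫ x : EuclideanSpace ℝ (Fin N),
        (‖fderiv ℝ (fun y : EuclideanSpace ℝ (Fin N) => g ‖y‖) x‖ ^ 2
          - Vpot N x * g ‖x‖ ^ 2) ≥
      -((N : ℝ) - 1) * ∫ x : EuclideanSpace ℝ (Fin N), g ‖x‖ ^ 2 / ‖x‖ ^ 2 := by
  obtain ⟨m, rfl⟩ := Nat.exists_eq_add_of_le' hN
  have hg1 : ContDiff ℝ 1 g := hg.of_le (by exact_mod_cast le_top)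
  have hgcont : Continuous g := hg1.continuous
  have hdcont : Continuous (deriv g) := hg1.continuous_deriv le_rfl
  have hVcont := continuous_radialV m
  -- Both integrals over the whole space are reduced to integrals over `(0,∞)`.
  have hL : ∫ x : EuclideanSpace ℝ (Fin (m + 3)),
        (‖fderiv ℝ (fun y : EuclideanSpace ℝ (Fin (m + 3)) => g ‖y‖) x‖ ^ 2
          - Vpot (m + 3) x * g ‖x‖ ^ 2)
      = ∫ x : EuclideanSpace ℝ (Fin (m + 3)),
          (fun r => deriv g r ^ 2 - radialV m r * g r ^ 2) ‖x‖ := by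
    refine integral_congr_ae ?_
    filter_upwards [Measure.ae_ne volume (0 : EuclideanSpace ℝ (Fin (m + 3)))] with x hx
    rw [norm_fderiv_radial hg1 hx, Vpot_eq_radialV]
  rw [hL, integral_fun_norm_addHaar volume (fun r => deriv g r ^ 2 - radialV m r * g r ^ 2),
    integral_fun_norm_addHaar volume (fun r => g r ^ 2 / r ^ 2)]
  simp only [finrank_euclideanSpace, Fintype.card_fin, smul_eq_mul, nsmul_eq_mul,
    show m + 3 - 1 = m + 2 from rfl]
  have hR : ∫ r in Ioi (0 : ℝ), r ^ (m + 2) * (g r ^ 2 / r ^ 2)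
      = ∫ r in Ioi (0 : ℝ), r ^ m * g r ^ 2 := by
    refine setIntegral_congr_fun measurableSet_Ioi fun r hr => ?_
    have : r ≠ 0 := (mem_Ioi.1 hr).ne'
    simp only [pow_add]
    field_simp
  rw [hR]
  have hi1 : Integrable (fun r => r ^ (m + 2) * (deriv g r ^ 2 - radialV m r * g r ^ 2)) := by
    refine Continuous.integrable_of_hasCompactSupport (by fun_prop) ?_
    refine hgc.mono' (Function.support_subset_iff'.2 fun r hr => ?_)
    have : deriv g r = 0 :=
      Function.notMem_support.1 fun h => hr (support_deriv_subset h)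
    simp [this, image_eq_zero_of_notMem_tsupport hr]
  have hi2 : Integrable (fun r => r ^ m * g r ^ 2) := by
    refine Continuous.integrable_of_hasCompactSupport (by fun_prop) ?_
    refine hgc.mono' (Function.support_subset_iff'.2 fun r hr => ?_)
    simp [image_eq_zero_of_notMem_tsupport hr]
  have hi3 : Integrable (deriv (flux m g)) :=
    ((contDiff_flux m hg1).continuous_deriv le_rfl).integrable_of_hasCompactSupport
      (hasCompactSupport_flux m hgc).deriv
  have key : 0 ≤ (∫ r in Ioi (0 : ℝ), r ^ (m + 2) * (deriv g r ^ 2 - radialV m r * g r ^ 2))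
      + ((m : ℝ) + 2) * ∫ r in Ioi (0 : ℝ), r ^ m * g r ^ 2 := by
    rw [← integral_const_mul,
      ← integral_add hi1.integrableOn (hi2.const_mul _).integrableOn]
    refine (flux_integral_eq_zero m hg1 hgc).ge.trans ?_
    refine setIntegral_mono_on hi3.integrableOn
      (hi1.add (hi2.const_mul _)).integrableOn measurableSet_Ioi fun r hr => ?_
    have hr0 : (0 : ℝ) < r := hr
    have := ground_state_identity m hg1 r
    have hsq : 0 ≤ r ^ m * (r * deriv g r - groundLog m r * g r) ^ 2 := by positivity
    linarith
  have hC : 0 ≤ ((m + 3 : ℕ) : ℝ) *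
      (volume : Measure (EuclideanSpace ℝ (Fin (m + 3)))).real (Metric.ball 0 1) := by positivity
  have := mul_nonneg hC key
  push_cast at this ⊢
  linarith
end

section
/- Let N ≥ 3, p_S = (N+2)/(N-2), U(x) = ( N(N-2)/(N(N-2)+|x|²) )^{(N-2)/2}, V(x) = p_S·U(x)^{p_S-1}, and η(x) = |x| / ( 1 + |x|²/(N(N-2)) )^{N/2}. Then the integrals ∫_{ℝ^N} |∇η|² dx, ∫_{ℝ^N} V·η² dx and ∫_{ℝ^N} η²/|x|² dx are all finite, ∫_{ℝ^N} η²/|x|² dx > 0, and ∫_{ℝ^N} ( |∇η|² - V·η² ) dx = -(N-1) · ∫_{ℝ^N} η²/|x|² dx. -/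
/-!
With `c = N (N - 2)`, `s = r² / c` and `w = 1 + s`, where `r = ‖x‖`, every integrand is, away from
the origin, a rational function of `r`:
`|∇η|² = (1 - (N-1)s)² / w^(N+2)`, `V η² = N(N+2) s / w^(N+2)` and `η² / |x|² = 1 / w^N`.
Each is bounded by a multiple of `w^(-N)`, which is integrable on `ℝ^N` since it decays like
`r^(-2N)`.

In polar coordinates the identity says that the integral over `(0, ∞)` of
`r^(N-1) (|∇η|² - V η² + (N-1) η²/r²)` vanishes. This is the radial form of the eigenvalue equation
for `η` tested against `η`: the integrand is the derivative of the flux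
`r^(N-1) η ∂ᵣη = r^N (1 - (N-1)s) / w^(N+1)`, which is zero at `r = 0` and tends to zero at infinity.
-/

open MeasureTheory Real Set

/-- The singular radial eigenfunction `η` of Theorem 3.13. -/
noncomputable def eta (N : ℕ) (x : EuclideanSpace ℝ (Fin N)) : ℝ :=
  ‖x‖ / (1 + ‖x‖ ^ 2 / ((N : ℝ) * ((N : ℝ) - 2))) ^ ((N : ℝ) / 2)

namespace EtaAttains

open Filter Topology

/-! ### Radial profiles -/

/-- The weight `w = 1 + r² / (N (N - 2))`. -/
noncomputable def w (N : ℕ) (r : ℝ) : ℝ := 1 + r ^ 2 / ((N : ℝ) * ((N : ℝ) - 2))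

/-- Radial profile of `|∇η|²`. -/
noncomputable def gradProfile (N : ℕ) (r : ℝ) : ℝ :=
  (1 - ((N : ℝ) - 1) * (r ^ 2 / ((N : ℝ) * ((N : ℝ) - 2)))) ^ 2 / w N r ^ (N + 2)

/-- Radial profile of `V η²`. -/
noncomputable def potProfile (N : ℕ) (r : ℝ) : ℝ :=
  (N : ℝ) * ((N : ℝ) + 2) * (r ^ 2 / ((N : ℝ) * ((N : ℝ) - 2))) / w N r ^ (N + 2)

/-- Radial profile of `η² / |x|²`, extended continuously to `r = 0`. -/
noncomputable def hardyProfile (N : ℕ) (r : ℝ) : ℝ := 1 / w N r ^ N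

/-- The flux `r^(N-1) η ∂ᵣη`. -/
noncomputable def flux (N : ℕ) (r : ℝ) : ℝ :=
  r ^ N * (1 - ((N : ℝ) - 1) * (r ^ 2 / ((N : ℝ) * ((N : ℝ) - 2)))) / w N r ^ (N + 1)

section

variable {N : ℕ}

lemma c_ge (hN : 3 ≤ N) : (3 : ℝ) ≤ (N : ℝ) * ((N : ℝ) - 2) := by
  have : (3 : ℝ) ≤ N := by exact_mod_cast hN
  nlinarith

lemma s_nonneg (hN : 3 ≤ N) (r : ℝ) : 0 ≤ r ^ 2 / ((N : ℝ) * ((N : ℝ) - 2)) :=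
  div_nonneg (sq_nonneg r) (by linarith [c_ge hN])

lemma w_pos (hN : 3 ≤ N) (r : ℝ) : 0 < w N r := by
  have := s_nonneg hN r
  unfold w; linarith

lemma continuous_w : Continuous (w N) := by unfold w; fun_prop

lemma continuous_gradProfile (hN : 3 ≤ N) : Continuous (gradProfile N) := by
  unfold gradProfile
  exact Continuous.div (by fun_prop) (continuous_w.pow _) fun r => (pow_pos (w_pos hN r) _).ne'

lemma continuous_potProfile (hN : 3 ≤ N) : Continuous (potProfile N) := by
  unfold potProfile
  exact Continuous.div (by fun_prop) (continuous_w.pow _) fun r => (pow_pos (w_pos hN r) _).ne'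

lemma continuous_hardyProfile (hN : 3 ≤ N) : Continuous (hardyProfile N) := by
  unfold hardyProfile
  exact Continuous.div (by fun_prop) (continuous_w.pow _) fun r => (pow_pos (w_pos hN r) _).ne'

lemma hardyProfile_pos (hN : 3 ≤ N) (r : ℝ) : 0 < hardyProfile N r :=
  one_div_pos.2 (pow_pos (w_pos hN r) _)

/-! ### Integrability -/

lemma abs_gradProfile_le (hN : 3 ≤ N) (r : ℝ) :
    |gradProfile N r| ≤ (N : ℝ) ^ 2 * hardyProfile N r := by
  have hw := w_pos hN r
  have hs := s_nonneg hN r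
  have hN' : (3 : ℝ) ≤ N := by exact_mod_cast hN
  have h1 : 0 ≤ gradProfile N r := by unfold gradProfile; positivity
  rw [abs_of_nonneg h1]
  unfold gradProfile hardyProfile
  rw [pow_add (w N r) N 2, mul_one_div, div_le_div_iff₀ (by positivity) (by positivity)]
  have key : (1 - ((N : ℝ) - 1) * (r ^ 2 / ((N : ℝ) * ((N : ℝ) - 2)))) ^ 2
      ≤ (N : ℝ) ^ 2 * w N r ^ 2 := by
    rw [← mul_pow]
    apply sq_le_sq'
    · unfold w; nlinarith
    · unfold w; nlinarith
  calc _ ≤ ((N : ℝ) ^ 2 * w N r ^ 2) * w N r ^ N := by gcongr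
    _ = _ := by ring

lemma abs_potProfile_le (hN : 3 ≤ N) (r : ℝ) :
    |potProfile N r| ≤ ((N : ℝ) * ((N : ℝ) + 2)) * hardyProfile N r := by
  have hw := w_pos hN r
  have hs := s_nonneg hN r
  have h1 : 0 ≤ potProfile N r := by unfold potProfile; positivity
  rw [abs_of_nonneg h1]
  unfold potProfile hardyProfile
  rw [pow_add (w N r) N 2, mul_one_div, div_le_div_iff₀ (by positivity) (by positivity)]
  have key : r ^ 2 / ((N : ℝ) * ((N : ℝ) - 2)) ≤ w N r ^ 2 := by
    unfold w; nlinarith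
  calc _ ≤ ((N : ℝ) * ((N : ℝ) + 2) * w N r ^ 2) * w N r ^ N := by gcongr
    _ = _ := by ring

lemma integrable_hardyProfile (hN : 3 ≤ N) :
    Integrable (fun x : EuclideanSpace ℝ (Fin N) => hardyProfile N ‖x‖) := by
  have hc := c_ge hN
  have hN' : (3 : ℝ) ≤ N := by exact_mod_cast hN
  have h := integrable_rpow_neg_one_add_norm_sq (E := EuclideanSpace ℝ (Fin N))
    (μ := volume) (r := 2 * (N : ℝ)) (by simp; linarith)
  refine (h.const_mul (((N : ℝ) * ((N : ℝ) - 2)) ^ N)).mono'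
    ((continuous_hardyProfile hN).comp continuous_norm).aestronglyMeasurable
    (Eventually.of_forall fun x => ?_)
  have hx : (0 : ℝ) < 1 + ‖x‖ ^ 2 := by positivity
  rw [Real.norm_of_nonneg (hardyProfile_pos hN _).le,
    show -(2 * (N : ℝ)) / 2 = -(N : ℝ) by ring, Real.rpow_neg hx.le, Real.rpow_natCast,
    ← div_eq_mul_inv, ← div_pow]
  unfold hardyProfile
  rw [← one_div_pow]
  have := w_pos hN ‖x‖
  refine pow_le_pow_left₀ (by positivity) ?_ N
  rw [div_le_div_iff₀ this hx]
  unfold w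
  have : (N : ℝ) * ((N : ℝ) - 2) * (1 + ‖x‖ ^ 2 / ((N : ℝ) * ((N : ℝ) - 2)))
      = (N : ℝ) * ((N : ℝ) - 2) + ‖x‖ ^ 2 := by
    rw [mul_add, mul_div_cancel₀ _ (by linarith), mul_one]
  linarith

lemma integrable_gradProfile (hN : 3 ≤ N) :
    Integrable (fun x : EuclideanSpace ℝ (Fin N) => gradProfile N ‖x‖) :=
  ((integrable_hardyProfile hN).const_mul _).mono'
    ((continuous_gradProfile hN).comp continuous_norm).aestronglyMeasurable
    (Eventually.of_forall fun _ => abs_gradProfile_le hN _)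

lemma integrable_potProfile (hN : 3 ≤ N) :
    Integrable (fun x : EuclideanSpace ℝ (Fin N) => potProfile N ‖x‖) :=
  ((integrable_hardyProfile hN).const_mul _).mono'
    ((continuous_potProfile hN).comp continuous_norm).aestronglyMeasurable
    (Eventually.of_forall fun _ => abs_potProfile_le hN _)

/-! ### The flux identity -/

/-- The radial eigenvalue equation for `η`, multiplied by `η`, in divergence form. -/
lemma hasDerivAt_flux (hN : 3 ≤ N) (r : ℝ) :
    HasDerivAt (flux N)
      (r ^ (N - 1) * (gradProfile N r - potProfile N r + ((N : ℝ) - 1) * hardyProfile N r)) r := by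
  have hw := w_pos hN r
  have hc := c_ge hN
  obtain ⟨c, hcdef⟩ : ∃ c : ℝ, c = (N : ℝ) * ((N : ℝ) - 2) := ⟨_, rfl⟩
  have hs : HasDerivAt (fun r : ℝ => r ^ 2 / c) (2 * r / c) r := by
    simpa using (hasDerivAt_pow 2 r).div_const c
  have hwd : HasDerivAt (w N) (2 * r / c) r := by
    unfold w; rw [← hcdef]; exact hs.const_add 1
  have hnum := (hasDerivAt_pow N r).mul ((hs.const_mul ((N : ℝ) - 1)).const_sub 1)
  have h := hnum.div (hwd.pow (N + 1)) (pow_pos hw _).ne'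
  have hfun : flux N = fun r => r ^ N * (1 - ((N : ℝ) - 1) * (r ^ 2 / c)) / w N r ^ (N + 1) := by
    funext r; simp [flux, hcdef]
  rw [hfun]
  refine h.congr_deriv ?_
  unfold gradProfile potProfile hardyProfile
  rw [← hcdef] at hc ⊢
  have hc0 : c ≠ 0 := by linarith
  have hrw : r ^ 2 = c * (w N r - 1) := by
    unfold w; rw [← hcdef]; field_simp; ring
  obtain ⟨n, rfl⟩ : ∃ n, N = n + 1 := ⟨N - 1, by omega⟩
  clear h hnum hwd hs hfun
  simp only [Nat.add_sub_cancel, Pi.mul_apply, Pi.pow_apply]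
  push_cast
  generalize w (n + 1) r = W at *
  have hW : W ≠ 0 := hw.ne'
  have hs' : r ^ 2 / c = W - 1 := by rw [hrw]; field_simp
  have hr : r ^ (n + 1) * (2 * r / c) = r ^ n * (2 * (W - 1)) := by
    rw [← hs']; ring
  rw [hs']
  generalize 2 * r / c = q at *
  generalize r ^ (n + 1) = P at *
  generalize r ^ n = R at *
  -- `P` and `q` occur only in the product `P * q`, so `hr` makes the numerator a multiple of `R`.
  have hnum : ((n + 1) * R * (1 - (n + 1 - 1) * (W - 1)) + P * -((n + 1 - 1) * q)) * W ^ (n + 1 + 1)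
        - P * (1 - (n + 1 - 1) * (W - 1)) * ((n + 1 + 1) * W ^ (n + 1) * q)
      = R * W ^ (n + 1) * (((n + 1) * (1 - n * (W - 1)) - 2 * n * (W - 1)) * W
        - 2 * (n + 2) * (W - 1) * (1 - n * (W - 1))) := by
    linear_combination (-n * W ^ (n + 2) - (1 - n * (W - 1)) * (n + 2) * W ^ (n + 1)) * hr
  rw [hnum]
  field_simp
  ring

lemma tendsto_flux (hN : 3 ≤ N) : Tendsto (flux N) atTop (𝓝 0) := by
  have hc := c_ge hN
  have hN' : (3 : ℝ) ≤ N := by exact_mod_cast hN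
  have hlim : Tendsto (fun r : ℝ => (N : ℝ) * (((N : ℝ) * ((N : ℝ) - 2)) / r) ^ N)
      atTop (𝓝 0) := by
    have h := ((tendsto_const_nhds (x := (N : ℝ) * ((N : ℝ) - 2))).div_atTop
      tendsto_id).pow N |>.const_mul (N : ℝ)
    simpa [show N ≠ 0 by omega] using h
  refine squeeze_zero_norm' ?_ hlim
  filter_upwards [eventually_gt_atTop 0] with r hr
  have hw := w_pos hN r
  have hs := s_nonneg hN r
  have hnum : |1 - ((N : ℝ) - 1) * (r ^ 2 / ((N : ℝ) * ((N : ℝ) - 2)))| ≤ N * w N r := by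
    rw [abs_le]; unfold w; constructor <;> nlinarith
  have hrw : r / w N r ≤ ((N : ℝ) * ((N : ℝ) - 2)) / r := by
    rw [div_le_div_iff₀ hw hr]
    unfold w
    rw [mul_add, mul_div_cancel₀ _ (by linarith), mul_one]
    nlinarith
  unfold flux
  rw [Real.norm_eq_abs, abs_div, abs_mul, abs_of_pos (pow_pos hr N),
    abs_of_pos (pow_pos hw (N + 1))]
  calc _ ≤ r ^ N * (N * w N r) / w N r ^ (N + 1) := by gcongr
    _ = N * (r / w N r) ^ N := by rw [div_pow]; field_simp; ring
    _ ≤ _ := by gcongr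

/-- The energy identity, from integrating the derivative of the flux over `(0, ∞)`. -/
lemma integral_profiles_eq_zero (hN : 3 ≤ N) :
    ∫ x : EuclideanSpace ℝ (Fin N), (gradProfile N ‖x‖ - potProfile N ‖x‖
      + ((N : ℝ) - 1) * hardyProfile N ‖x‖) = 0 := by
  have : Nontrivial (EuclideanSpace ℝ (Fin N)) := by
    have : Nonempty (Fin N) := ⟨⟨0, by omega⟩⟩
    infer_instance
  have hint : Integrable (fun x : EuclideanSpace ℝ (Fin N) => gradProfile N ‖x‖ - potProfile N ‖x‖
      + ((N : ℝ) - 1) * hardyProfile N ‖x‖) :=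
    ((integrable_gradProfile hN).sub (integrable_potProfile hN)).add
      ((integrable_hardyProfile hN).const_mul _)
  have hint1 := (integrable_fun_norm_addHaar volume (f := fun r => gradProfile N r - potProfile N r
      + ((N : ℝ) - 1) * hardyProfile N r)).1 hint
  rw [integral_fun_norm_addHaar volume (fun r => gradProfile N r - potProfile N r
      + ((N : ℝ) - 1) * hardyProfile N r)]
  simp only [finrank_euclideanSpace, Fintype.card_fin, smul_eq_mul] at hint1 ⊢
  rw [integral_Ioi_of_hasDerivAt_of_tendsto' (fun r _ => hasDerivAt_flux hN r) hint1
    (tendsto_flux hN)]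
  simp [flux, show N ≠ 0 by omega]

/-! ### Identification of the integrands with the profiles -/

lemma rpow_half_sq (hN : 3 ≤ N) (r : ℝ) : (w N r ^ ((N : ℝ) / 2)) ^ 2 = w N r ^ N := by
  rw [← Real.rpow_mul_natCast (w_pos hN r).le, ← Real.rpow_natCast]
  congr 1
  push_cast; ring

lemma eta_sq (hN : 3 ≤ N) (x : EuclideanSpace ℝ (Fin N)) :
    eta N x ^ 2 = ‖x‖ ^ 2 / w N ‖x‖ ^ N := by
  rw [← rpow_half_sq hN, ← div_pow]; rfl

lemma eta_sq_div (hN : 3 ≤ N) {x : EuclideanSpace ℝ (Fin N)} (hx : x ≠ 0) :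
    eta N x ^ 2 / ‖x‖ ^ 2 = hardyProfile N ‖x‖ := by
  have := w_pos hN ‖x‖
  have : ‖x‖ ≠ 0 := norm_ne_zero_iff.2 hx
  rw [eta_sq hN]; unfold hardyProfile
  field_simp

lemma Vpot_eq (hN : 3 ≤ N) (x : EuclideanSpace ℝ (Fin N)) :
    Vpot N x = ((N : ℝ) + 2) / ((N : ℝ) - 2) / w N ‖x‖ ^ 2 := by
  have hw := w_pos hN ‖x‖
  have hc := c_ge hN
  have hN' : (3 : ℝ) ≤ N := by exact_mod_cast hN
  have hb : (N : ℝ) * ((N : ℝ) - 2) / ((N : ℝ) * ((N : ℝ) - 2) + ‖x‖ ^ 2) = (w N ‖x‖)⁻¹ := by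
    unfold w
    generalize (N : ℝ) * ((N : ℝ) - 2) = c at *
    have : c ≠ 0 := by linarith
    have : c + ‖x‖ ^ 2 ≠ 0 := by positivity
    field_simp
  have hN2 : (N : ℝ) - 2 ≠ 0 := by linarith
  unfold Vpot Ububble
  rw [hb, ← Real.rpow_mul (inv_nonneg.2 hw.le),
    show ((N : ℝ) - 2) / 2 * (((N : ℝ) + 2) / ((N : ℝ) - 2) - 1) = (2 : ℕ) by
      push_cast; field_simp; ring, Real.rpow_natCast, inv_pow, ← div_eq_mul_inv]

lemma Vpot_mul_eta_sq (hN : 3 ≤ N) (x : EuclideanSpace ℝ (Fin N)) :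
    Vpot N x * eta N x ^ 2 = potProfile N ‖x‖ := by
  have hw := w_pos hN ‖x‖
  have hN' : (3 : ℝ) ≤ N := by exact_mod_cast hN
  have hN2 : (N : ℝ) - 2 ≠ 0 := by linarith
  have hN0 : (N : ℝ) ≠ 0 := by linarith
  rw [Vpot_eq hN, eta_sq hN]; unfold potProfile
  field_simp
  ring

/-- Away from the origin, `|∇η| = |∂ᵣη|`, since the norm has a gradient of length one. -/
lemma norm_fderiv_eta_sq (hN : 3 ≤ N) {x : EuclideanSpace ℝ (Fin N)} (hx : x ≠ 0) :
    ‖fderiv ℝ (eta N) x‖ ^ 2 = gradProfile N ‖x‖ := by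
  have : Nontrivial (EuclideanSpace ℝ (Fin N)) := ⟨x, 0, hx⟩
  have hw := w_pos hN ‖x‖
  have hc := c_ge hN
  have hN' : (3 : ℝ) ≤ N := by exact_mod_cast hN
  have hd : DifferentiableAt ℝ (fun y : EuclideanSpace ℝ (Fin N) => ‖y‖) x :=
    differentiableAt_id.norm ℝ hx
  set r := ‖x‖ with hr
  have hwd : HasDerivAt (w N) (2 * r / ((N : ℝ) * ((N : ℝ) - 2))) r := by
    unfold w
    simpa using ((hasDerivAt_pow 2 r).div_const ((N : ℝ) * ((N : ℝ) - 2))).const_add 1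
  have hp := hwd.rpow_const (p := (N : ℝ) / 2) (Or.inl hw.ne')
  have hg := (hasDerivAt_id r).div hp (Real.rpow_pos_of_pos hw _).ne'
  have hcomp := hg.comp_hasFDerivAt x hd.hasFDerivAt
  have hfun : eta N = (id / fun r => w N r ^ ((N : ℝ) / 2)) ∘ fun y => ‖y‖ := by
    funext y; rfl
  rw [hfun, hcomp.fderiv, norm_smul, norm_fderiv_norm hd, mul_one, Real.norm_eq_abs, sq_abs,
    div_pow, rpow_half_sq hN, Real.rpow_sub_one hw.ne']
  -- Factor `w^(N/2)` out of the numerator of the quotient rule.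
  have hnum : (1 * w N r ^ ((N : ℝ) / 2) - id r * (2 * r / ((N : ℝ) * ((N : ℝ) - 2)) * ((N : ℝ) / 2)
      * (w N r ^ ((N : ℝ) / 2) / w N r)))
      = w N r ^ ((N : ℝ) / 2) *
        ((1 - ((N : ℝ) - 1) * (r ^ 2 / ((N : ℝ) * ((N : ℝ) - 2)))) / w N r) := by
    have hW : w N r = 1 + r ^ 2 / ((N : ℝ) * ((N : ℝ) - 2)) := rfl
    generalize w N r ^ ((N : ℝ) / 2) = A
    generalize (N : ℝ) * ((N : ℝ) - 2) = c at *
    have : c ≠ 0 := by linarith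
    simp only [id]
    field_simp
    rw [hW]
    field_simp
    ring
  rw [hnum]
  rw [mul_pow, rpow_half_sq hN]
  unfold gradProfile
  rw [div_pow, pow_add]
  field_simp

end

end EtaAttains

/-- Attainment part of Theorem 3.13: `η` realizes equality at the level `-(N-1)`
in the singular Rayleigh quotient for the linearized operator at the bubble. -/
theorem eta_attains_singular_eigenvalue
    (N : ℕ) (hN : 3 ≤ N) :
    Integrable (fun x : EuclideanSpace ℝ (Fin N) => ‖fderiv ℝ (eta N) x‖ ^ 2) ∧
    Integrable (fun x : EuclideanSpace ℝ (Fin N) => Vpot N x * eta N x ^ 2) ∧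
    Integrable (fun x : EuclideanSpace ℝ (Fin N) => eta N x ^ 2 / ‖x‖ ^ 2) ∧
    0 < ∫ x : EuclideanSpace ℝ (Fin N), eta N x ^ 2 / ‖x‖ ^ 2 ∧
    ∫ x : EuclideanSpace ℝ (Fin N), (‖fderiv ℝ (eta N) x‖ ^ 2 - Vpot N x * eta N x ^ 2)
      = -((N : ℝ) - 1) * ∫ x : EuclideanSpace ℝ (Fin N), eta N x ^ 2 / ‖x‖ ^ 2 := by
  have : Nontrivial (EuclideanSpace ℝ (Fin N)) := by
    have : Nonempty (Fin N) := ⟨⟨0, by omega⟩⟩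
    infer_instance
  have hne : ∀ᵐ x : EuclideanSpace ℝ (Fin N), x ≠ 0 := Measure.ae_ne volume 0
  have hG := EtaAttains.integrable_gradProfile hN
  have hP := EtaAttains.integrable_potProfile hN
  have hH := EtaAttains.integrable_hardyProfile hN
  have eG : (fun x : EuclideanSpace ℝ (Fin N) => ‖fderiv ℝ (eta N) x‖ ^ 2)
      =ᵐ[volume] fun x => EtaAttains.gradProfile N ‖x‖ :=
    hne.mono fun x hx => EtaAttains.norm_fderiv_eta_sq hN hx
  have eP : (fun x : EuclideanSpace ℝ (Fin N) => Vpot N x * eta N x ^ 2)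
      =ᵐ[volume] fun x => EtaAttains.potProfile N ‖x‖ :=
    Filter.Eventually.of_forall fun x => EtaAttains.Vpot_mul_eta_sq hN x
  have eH : (fun x : EuclideanSpace ℝ (Fin N) => eta N x ^ 2 / ‖x‖ ^ 2)
      =ᵐ[volume] fun x => EtaAttains.hardyProfile N ‖x‖ :=
    hne.mono fun x hx => EtaAttains.eta_sq_div hN hx
  refine ⟨hG.congr eG.symm, hP.congr eP.symm, hH.congr eH.symm, ?_, ?_⟩
  · rw [integral_congr_ae eH, integral_pos_iff_support_of_nonneg
      (fun x => (EtaAttains.hardyProfile_pos hN _).le) hH]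
    have : Function.support (fun x : EuclideanSpace ℝ (Fin N) => EtaAttains.hardyProfile N ‖x‖)
        = Set.univ := by
      ext x; simp [(EtaAttains.hardyProfile_pos hN ‖x‖).ne']
    rw [this]
    exact isOpen_univ.measure_pos volume Set.univ_nonempty
  · have h0 := EtaAttains.integral_profiles_eq_zero hN
    have hadd := integral_add (hG.sub hP) (hH.const_mul ((N : ℝ) - 1))
    simp only [Pi.sub_apply] at hadd
    rw [hadd, integral_const_mul] at h0
    have hsub := integral_congr_ae (eG.sub eP)
    simp only [Pi.sub_apply] at hsub
    rw [hsub, integral_congr_ae eH]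
    linarith
end

section
/- Let N ≥ 3, p_S = (N+2)/(N-2), U(x) = ( N(N-2)/(N(N-2)+|x|²) )^{(N-2)/2}, V(x) = p_S·U(x)^{p_S-1}, and η(x) = |x| / ( 1 + |x|²/(N(N-2)) )^{N/2}. Let Ω ⊆ ℝ^N \ {0} be an open cone and let Y : Ω → ℝ be twice continuously differentiable, positively homogeneous of degree zero, and satisfy -ΔY(x) = λ·Y(x)/|x|² on Ω for some λ ∈ ℝ. Then ψ(x) := η(x)·Y(x) satisfies -Δψ(x) - V(x)·ψ(x) = (λ - (N-1))·ψ(x)/|x|² for every x ∈ Ω. In particular, if λ < N-1 then the coefficient λ - (N-1) on the right-hand side is negative. -/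
/-!
Write `c = N (N - 2)`. On `ℝ^N \ {0}` the function `η` is `g (‖y‖²)` with
`g t = √t * (1 + t / c) ^ (-N / 2)`, and `g' = g h` for the rational function
`h t = 1 / (2 t) - N / (2 (c + t))`. The product rule gives

  `Δ(η Y) = (4 ‖x‖² g'' + 2 N g') Y + 4 g' ⟪x, ∇Y⟫ + η ΔY`   (`g` evaluated at `‖x‖²`).

The cross term vanishes because `Y` is homogeneous of degree zero (`fderiv_self_eq_zero`), and
`ΔY = -λ Y / ‖x‖²` by hypothesis. What remains is a rational identity in `t = ‖x‖²`, using
`g'' = g (h² + h')` and `V = (N + 2) / (N - 2) * (c / (c + t))²` (`Vpot_eq`):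
`4 t (h² + h') + 2 N h = (N - 1) / t - V`.
-/

open MeasureTheory Real Set

/-- The Euclidean Laplacian, as the sum of second partial derivatives. -/
noncomputable def laplacian {N : ℕ} (f : EuclideanSpace ℝ (Fin N) → ℝ)
    (x : EuclideanSpace ℝ (Fin N)) : ℝ :=
  ∑ i : Fin N, fderiv ℝ (fun y => fderiv ℝ f y (EuclideanSpace.single i 1)) x
    (EuclideanSpace.single i 1)

/-- The radial profile of `η` as a function of `t = ‖x‖²`, with `c = N (N - 2)`. -/
noncomputable def etaProfile (n c t : ℝ) : ℝ := √t * (1 + t / c) ^ (-(n / 2))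

/-- The logarithmic derivative of `etaProfile n c`. -/
noncomputable def etaLogDeriv (n c t : ℝ) : ℝ := 1 / (2 * t) - n / (2 * (c + t))

lemma eta_eq_profile (N : ℕ) (y : EuclideanSpace ℝ (Fin N)) (hc : 0 < (N : ℝ) * ((N : ℝ) - 2)) :
    eta N y = etaProfile N ((N : ℝ) * ((N : ℝ) - 2)) (‖y‖ ^ 2) := by
  have hA : 0 ≤ 1 + ‖y‖ ^ 2 / ((N : ℝ) * ((N : ℝ) - 2)) := by positivity
  rw [eta, etaProfile, Real.sqrt_sq (norm_nonneg y), Real.rpow_neg hA, div_eq_mul_inv]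

lemma hasDerivAt_etaProfile {n c t : ℝ} (hc : 0 < c) (ht : 0 < t) :
    HasDerivAt (etaProfile n c) (etaProfile n c t * etaLogDeriv n c t) t := by
  have hA : 0 < 1 + t / c := by positivity
  have h1 : HasDerivAt (fun s : ℝ => 1 + s / c) (1 / c) t :=
    ((hasDerivAt_id t).div_const c).const_add 1
  have h2 := (Real.hasDerivAt_sqrt ht.ne').mul (h1.rpow_const (p := -(n / 2)) (Or.inl hA.ne'))
  refine h2.congr_deriv ?_
  have hs : √t ≠ 0 := (Real.sqrt_pos.2 ht).ne'
  have hss : √t ^ 2 = t := Real.sq_sqrt ht.le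
  have hct : c + t ≠ 0 := by positivity
  have hAc : 1 + t / c = (c + t) / c := by field_simp
  rw [etaProfile, etaLogDeriv, Real.rpow_sub_one hA.ne']
  generalize (1 + t / c) ^ (-(n / 2)) = B
  rw [hAc]
  generalize √t = s at *
  subst hss
  field_simp
  ring

lemma hasDerivAt_etaLogDeriv {n c t : ℝ} (hc : 0 < c) (ht : 0 < t) :
    HasDerivAt (etaLogDeriv n c) (-1 / (2 * t ^ 2) + n / (2 * (c + t) ^ 2)) t := by
  have hct : c + t ≠ 0 := by positivity
  have h1 : HasDerivAt (fun s : ℝ => 2 * s) (2 * 1) t := (hasDerivAt_id t).const_mul 2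
  have h2 : HasDerivAt (fun s : ℝ => 2 * (c + s)) (2 * 1) t :=
    ((hasDerivAt_id t).const_add c).const_mul 2
  have h3 := ((hasDerivAt_const t (1 : ℝ)).div h1 (by positivity)).sub
    ((hasDerivAt_const t n).div h2 (by positivity))
  refine h3.congr_deriv ?_
  field_simp
  ring

/-- Chain rule for a function of `‖y‖²`. -/
lemma hasFDerivAt_comp_normSq {N : ℕ} {g : ℝ → ℝ} {g' : ℝ} {y : EuclideanSpace ℝ (Fin N)}
    (hg : HasDerivAt g g' (‖y‖ ^ 2)) :
    HasFDerivAt (fun z : EuclideanSpace ℝ (Fin N) => g (‖z‖ ^ 2))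
      (g' • (2 • innerSL ℝ y)) y :=
  hg.comp_hasFDerivAt y (hasStrictFDerivAt_norm_sq y).hasFDerivAt

/-- Euler's relation in degree zero: the radial derivative of `Y` vanishes. -/
lemma fderiv_self_eq_zero {N : ℕ} {Y : EuclideanSpace ℝ (Fin N) → ℝ}
    {x : EuclideanSpace ℝ (Fin N)} (hd : DifferentiableAt ℝ Y x)
    (hhom : ∀ s : ℝ, 0 < s → Y (s • x) = Y x) : fderiv ℝ Y x x = 0 := by
  have h1 : HasDerivAt (fun s : ℝ => s • x) ((1 : ℝ) • x) 1 := (hasDerivAt_id 1).smul_const x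
  have hd' : HasFDerivAt Y (fderiv ℝ Y x) ((1 : ℝ) • x) := by
    rw [one_smul]; exact hd.hasFDerivAt
  have h2 := hd'.comp_hasDerivAt (1 : ℝ) h1
  have h3 : HasDerivAt (Y ∘ fun s : ℝ => s • x) 0 1 := by
    refine (hasDerivAt_const (1 : ℝ) (Y x)).congr_of_eventuallyEq ?_
    filter_upwards [lt_mem_nhds (zero_lt_one' ℝ)] with s hs using hhom s hs
  simpa using h2.unique h3

lemma Vpot_eq (N : ℕ) (x : EuclideanSpace ℝ (Fin N)) (hN : 0 < (N : ℝ) - 2) :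
    Vpot N x = ((N : ℝ) + 2) / ((N : ℝ) - 2) *
      ((N : ℝ) * ((N : ℝ) - 2) / ((N : ℝ) * ((N : ℝ) - 2) + ‖x‖ ^ 2)) ^ 2 := by
  have hb : 0 ≤ (N : ℝ) * ((N : ℝ) - 2) / ((N : ℝ) * ((N : ℝ) - 2) + ‖x‖ ^ 2) := by positivity
  -- `(N - 2) / 2 * (p_S - 1) = 2`.
  have he : ((N : ℝ) - 2) / 2 * (((N : ℝ) + 2) / ((N : ℝ) - 2) - 1) = (2 : ℕ) := by
    field_simp
    push_cast
    ring
  rw [Vpot, Ububble, ← Real.rpow_mul hb, he, Real.rpow_natCast]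

/-- Laplacian of a radial function times `Y`, when the radial derivative of `Y` vanishes at `x`.
Here `g1` is the derivative of `g` on `(0, ∞)`, and `g2` that of `g1` at `‖x‖²`. -/
lemma laplacian_radial_mul {N : ℕ} {Ω : Set (EuclideanSpace ℝ (Fin N))}
    (hΩ0 : Ω ⊆ {0}ᶜ) (hΩopen : IsOpen Ω)
    {Y : EuclideanSpace ℝ (Fin N) → ℝ} (hY : ContDiffOn ℝ 2 Y Ω)
    {g g1 : ℝ → ℝ} {g2 : ℝ} {x : EuclideanSpace ℝ (Fin N)} (hx : x ∈ Ω)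
    (hg : ∀ t, 0 < t → HasDerivAt g (g1 t) t) (hg1 : HasDerivAt g1 g2 (‖x‖ ^ 2))
    (hrad : fderiv ℝ Y x x = 0) :
    laplacian (fun y => g (‖y‖ ^ 2) * Y y) x =
      (4 * ‖x‖ ^ 2 * g2 + 2 * N * g1 (‖x‖ ^ 2)) * Y x + g (‖x‖ ^ 2) * laplacian Y x := by
  have hpos : ∀ y ∈ Ω, 0 < ‖y‖ ^ 2 := fun y hy => by
    have : 0 < ‖y‖ := norm_pos_iff.2 (hΩ0 hy)
    positivity
  have hYat : ∀ y ∈ Ω, ContDiffAt ℝ 2 Y y := fun y hy => hY.contDiffAt (hΩopen.mem_nhds hy)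
  have hYd : ∀ y ∈ Ω, HasFDerivAt Y (fderiv ℝ Y y) y := fun y hy =>
    ((hYat y hy).differentiableAt (by norm_num)).hasFDerivAt
  have hgd : ∀ y ∈ Ω, HasFDerivAt (fun z : EuclideanSpace ℝ (Fin N) => g (‖z‖ ^ 2))
      (g1 (‖y‖ ^ 2) • (2 • innerSL ℝ y)) y := fun y hy =>
    hasFDerivAt_comp_normSq (hg _ (hpos y hy))
  have hfirst : ∀ i : Fin N, ∀ y ∈ Ω,
      fderiv ℝ (fun z => g (‖z‖ ^ 2) * Y z) y (EuclideanSpace.single i 1) =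
        g (‖y‖ ^ 2) * fderiv ℝ Y y (EuclideanSpace.single i 1) +
          Y y * (g1 (‖y‖ ^ 2) * (2 * y i)) := fun i y hy => by
    rw [((hgd y hy).fun_mul (hYd y hy)).fderiv]
    simp [EuclideanSpace.inner_single_right]
  have hsecond : ∀ i : Fin N,
      fderiv ℝ (fun y => fderiv ℝ (fun z => g (‖z‖ ^ 2) * Y z) y (EuclideanSpace.single i 1)) x
        (EuclideanSpace.single i 1) =
      g (‖x‖ ^ 2) * fderiv ℝ (fun y => fderiv ℝ Y y (EuclideanSpace.single i 1)) x
          (EuclideanSpace.single i 1) +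
        4 * g1 (‖x‖ ^ 2) * (x i * fderiv ℝ Y x (EuclideanSpace.single i 1)) +
        4 * g2 * Y x * x i ^ 2 + 2 * g1 (‖x‖ ^ 2) * Y x := fun i => by
    have hev : (fun y => fderiv ℝ (fun z => g (‖z‖ ^ 2) * Y z) y (EuclideanSpace.single i 1))
        =ᶠ[nhds x] fun y => g (‖y‖ ^ 2) * fderiv ℝ Y y (EuclideanSpace.single i 1) +
          Y y * (g1 (‖y‖ ^ 2) * (2 * y i)) := by
      filter_upwards [hΩopen.mem_nhds hx] with y hy using hfirst i y hy
    have hdd : DifferentiableAt ℝ (fun y => fderiv ℝ Y y (EuclideanSpace.single i 1)) x :=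
      (((hYat x hx).fderiv_right (m := 1) (by norm_num)).differentiableAt
        (by norm_num)).clm_apply (differentiableAt_const _)
    have hcoord : HasFDerivAt (fun y : EuclideanSpace ℝ (Fin N) => 2 * y i)
        ((2 : ℝ) • (EuclideanSpace.proj i : EuclideanSpace ℝ (Fin N) →L[ℝ] ℝ)) x :=
      (EuclideanSpace.proj i : EuclideanSpace ℝ (Fin N) →L[ℝ] ℝ).hasFDerivAt.const_mul 2
    have hall := ((hgd x hx).fun_mul hdd.hasFDerivAt).fun_add
      ((hYd x hx).fun_mul ((hasFDerivAt_comp_normSq hg1).fun_mul hcoord))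
    rw [hev.fderiv_eq, hall.fderiv]
    simp [EuclideanSpace.inner_single_right]
    ring
  have hsum : ∑ i, x i * fderiv ℝ Y x (EuclideanSpace.single i 1) = 0 := by
    have h := congrArg (fderiv ℝ Y x) ((EuclideanSpace.basisFun (Fin N) ℝ).sum_repr x)
    rw [hrad, map_sum] at h
    simpa using h
  rw [laplacian, Finset.sum_congr rfl fun i _ => hsecond i]
  simp only [Finset.sum_add_distrib, ← Finset.mul_sum, hsum, laplacian,
    ← EuclideanSpace.real_norm_sq_eq x]
  simp
  ring

/-- Key construction in Step 1 of the proof of Theorem 4.3: the product of `η` with a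
degree-zero homogeneous spherical eigenfunction of eigenvalue `λ` is a singular
eigenfunction of the linearized operator at the bubble with eigenvalue `λ - (N-1)`. -/
theorem eta_times_spherical_eigenfunction
    (N : ℕ) (hN : 3 ≤ N)
    (Ω : Set (EuclideanSpace ℝ (Fin N)))
    (hΩ0 : Ω ⊆ {0}ᶜ) (hΩopen : IsOpen Ω)
    (hcone : ∀ x ∈ Ω, ∀ s : ℝ, 0 < s → s • x ∈ Ω)
    (Y : EuclideanSpace ℝ (Fin N) → ℝ) (hY : ContDiffOn ℝ 2 Y Ω)
    (hYhom : ∀ x ∈ Ω, ∀ s : ℝ, 0 < s → Y (s • x) = Y x)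
    (lam : ℝ) (hYeq : ∀ x ∈ Ω, -laplacian Y x = lam * Y x / ‖x‖ ^ 2) :
    (∀ x ∈ Ω,
      -laplacian (fun y => eta N y * Y y) x - Vpot N x * (eta N x * Y x)
        = (lam - ((N : ℝ) - 1)) * (eta N x * Y x) / ‖x‖ ^ 2) ∧
    (lam < (N : ℝ) - 1 → lam - ((N : ℝ) - 1) < 0) := by
  refine ⟨fun x hx => ?_, fun h => by linarith⟩
  have hN3 : (3 : ℝ) ≤ N := by exact_mod_cast hN
  have hN2 : 0 < (N : ℝ) - 2 := by linarith
  have hc : 0 < (N : ℝ) * ((N : ℝ) - 2) := by positivity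
  have ht : 0 < ‖x‖ ^ 2 := pow_pos (norm_pos_iff.2 (hΩ0 hx)) 2
  have hYd : DifferentiableAt ℝ Y x :=
    (hY.contDiffAt (hΩopen.mem_nhds hx)).differentiableAt (by norm_num)
  have hL : laplacian Y x = -(lam * Y x / ‖x‖ ^ 2) := by rw [← hYeq x hx, neg_neg]
  have hfun : (fun y => eta N y * Y y) =
      fun y => etaProfile N ((N : ℝ) * ((N : ℝ) - 2)) (‖y‖ ^ 2) * Y y := by
    funext y
    rw [eta_eq_profile N y hc]
  rw [hfun, laplacian_radial_mul hΩ0 hΩopen hY hx (fun t ht => hasDerivAt_etaProfile hc ht)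
    ((hasDerivAt_etaProfile hc ht).mul (hasDerivAt_etaLogDeriv hc ht))
    (fderiv_self_eq_zero hYd (hYhom x hx)), hL, Vpot_eq N x hN2, eta_eq_profile N x hc]
  generalize etaProfile N ((N : ℝ) * ((N : ℝ) - 2)) (‖x‖ ^ 2) = G
  rw [etaLogDeriv]
  generalize ‖x‖ ^ 2 = t at ht ⊢
  have hct : (N : ℝ) * ((N : ℝ) - 2) + t ≠ 0 := by positivity
  have hN0 : (N : ℝ) ≠ 0 := by positivity
  field_simp
  ring
end
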